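/- Let A = ℚ[t₁] ⊗ Λ(v₁,…,v₅) with deg v₁ = deg v₂ = deg v₃ = 3 and deg v₄ = deg v₅ = 7, and let D be the unique derivation of degree +1 on A with D t₁ = 0, D v₁ = D v₂ = D v₃ = D v₅ = 0 and D v₄ = v₁v₂t₁ + t₁⁴. Then D ∘ D = 0 and dim_ℚ H(A, D) < ∞. -/

import Mathlib

/-!
Write `N = v₁v₂t₁`, so that `D v₄ = t₁⁴ + N` with `N` and `t₁` even cocycles and `N² = 0`.

`D ∘ D = 0`: by the Leibniz rule, left multiplication by each generator commutes with `D ∘ D`, since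
the differential of a generator is either zero or the even cocycle `t₁⁴ + N`. The elements with this
property form a subalgebra, which is therefore everything (`eq_top_of_generators_mem`), and
`D (D 1) = 0`.

Finiteness: for a cocycle `a`, the element `(t₁⁴ - N) a` is again a cocycle, so
`D (v₄ (t₁⁴ - N) a) = (t₁⁴ + N)(t₁⁴ - N) a = t₁⁸ a`. Hence `t₁⁸` annihilates the cohomology. As the
algebra is a finite module over the Noetherian ring `ℚ[t₁]`, the cocycles form a finitely generated
`ℚ[t₁]`-module, and cohomology is finite over `ℚ[t₁]/(t₁⁸)` (`finiteDimensional_of_tg_pow`).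
-/

/- D t₁ = 0, D v₁ = D v₂ = D v₃ = D v₅ = 0, D v₄ = v₁v₂t₁ + t₁⁴ on ℚ[t₁] ⊗ Λ(v₁,…,v₅), deg v = (3,3,3,7,7). -/

open scoped TensorProduct

set_option synthInstance.maxHeartbeats 1000000
set_option maxHeartbeats 1000000

noncomputable section

/-- The free graded-commutative ℚ-algebra `ℚ[t₁,…,t_r] ⊗ Λ(v₁,…,v_n)`:
the tensor product of a polynomial algebra on `r` generators of degree 2 with
an exterior algebra on `n` generators of odd degrees. -/
abbrev FGCA (r n : ℕ) : Type :=
  MvPolynomial (Fin r) ℚ ⊗[ℚ] ExteriorAlgebra ℚ (Fin n → ℚ)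

/-- The degree-2 polynomial generators `tᵢ`. -/
def tg (r n : ℕ) (i : Fin r) : FGCA r n := (MvPolynomial.X i) ⊗ₜ 1

/-- The odd-degree exterior generators `vⱼ`. -/
def vg (r n : ℕ) (j : Fin n) : FGCA r n :=
  1 ⊗ₜ (ExteriorAlgebra.ι ℚ (Pi.single j (1 : ℚ)))

/-- The monomial `t^α · v_S` (with the exterior factors multiplied in increasing
order of index).  These monomials form a ℚ-basis of `FGCA r n`. -/
def gmon (r n : ℕ) (α : Fin r →₀ ℕ) (S : Finset (Fin n)) : FGCA r n :=
  (MvPolynomial.monomial α (1 : ℚ)) ⊗ₜ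
    ((S.sort (· ≤ ·)).map fun j => ExteriorAlgebra.ι ℚ (Pi.single j (1 : ℚ))).prod

/-- The (cohomological) degree of the monomial `t^α · v_S`, where each `tᵢ` has
degree `2` and each `vⱼ` has degree `dv j`. -/
def gdeg (r n : ℕ) (dv : Fin n → ℕ) (α : Fin r →₀ ℕ) (S : Finset (Fin n)) : ℕ :=
  (α.sum fun _ k => 2 * k) + S.sum dv

/-- The homogeneous part of degree `k` of `FGCA r n`: the span of the monomials
of degree `k`. -/
def homog (r n : ℕ) (dv : Fin n → ℕ) (k : ℕ) : Submodule ℚ (FGCA r n) :=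
  Submodule.span ℚ { a | ∃ α S, gdeg r n dv α S = k ∧ a = gmon r n α S }

/-- The graded Leibniz rule for a degree `+1` derivation `D`:
`D(ab) = D(a)·b + (−1)^(deg a) a·D(b)` for homogeneous `a`. -/
def IsLeibniz (r n : ℕ) (dv : Fin n → ℕ) (D : FGCA r n →ₗ[ℚ] FGCA r n) : Prop :=
  ∀ (p : ℕ) (a b : FGCA r n), a ∈ homog r n dv p →
    D (a * b) = D a * b + ((-1 : ℚ) ^ p) • (a * D b)

/-- `D` raises (cohomological) degree by `1`. -/
def RaisesDegByOne (r n : ℕ) (dv : Fin n → ℕ) (D : FGCA r n →ₗ[ℚ] FGCA r n) : Prop :=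
  ∀ (k : ℕ), ∀ a ∈ homog r n dv k, D a ∈ homog r n dv (k + 1)

/-- The cohomology `H(A, D) = ker D / im D` as a ℚ-vector space, realized as the
image of `ker D` in `A ⧸ im D`. -/
abbrev Cohomology (r n : ℕ) (D : FGCA r n →ₗ[ℚ] FGCA r n) : Type :=
  (LinearMap.ker D).map (LinearMap.range D).mkQ

end

noncomputable section

section Helpers

variable {r n : ℕ}

lemma one_mem_homog (d : Fin n → ℕ) : (1 : FGCA r n) ∈ homog r n d 0 := by
  refine Submodule.subset_span ⟨0, ∅, ?_, ?_⟩
  · simp [gdeg]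
  · simp [gmon, Algebra.TensorProduct.one_def]

lemma tg_mem_homog (d : Fin n → ℕ) (i : Fin r) : tg r n i ∈ homog r n d 2 := by
  refine Submodule.subset_span ⟨Finsupp.single i 1, ∅, ?_, ?_⟩
  · simp [gdeg]
  · simp [gmon, tg, MvPolynomial.X]

lemma vg_mem_homog (d : Fin n → ℕ) (j : Fin n) : vg r n j ∈ homog r n d (d j) := by
  refine Submodule.subset_span ⟨0, {j}, ?_, ?_⟩
  · simp [gdeg]
  · simp [gmon, vg]

/-- The generators `tᵢ`, `vⱼ` generate `FGCA r n` as an algebra. -/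
lemma eq_top_of_generators_mem (S : Subalgebra ℚ (FGCA r n))
    (ht : ∀ i, tg r n i ∈ S) (hv : ∀ j, vg r n j ∈ S) : S = ⊤ := by
  have hp : ∀ p : MvPolynomial (Fin r) ℚ, p ⊗ₜ[ℚ] (1 : ExteriorAlgebra ℚ (Fin n → ℚ)) ∈ S := by
    have h : S.comap Algebra.TensorProduct.includeLeft = ⊤ := by
      rw [eq_top_iff, ← MvPolynomial.adjoin_range_X, Algebra.adjoin_le_iff]
      rintro _ ⟨i, rfl⟩
      exact ht i
    intro p
    have : p ∈ S.comap (Algebra.TensorProduct.includeLeft) := h ▸ Algebra.mem_top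
    exact this
  have hx : ∀ x : ExteriorAlgebra ℚ (Fin n → ℚ), (1 : MvPolynomial (Fin r) ℚ) ⊗ₜ[ℚ] x ∈ S := by
    have h : S.comap Algebra.TensorProduct.includeRight = ⊤ := by
      rw [eq_top_iff, ← CliffordAlgebra.adjoin_range_ι, Algebra.adjoin_le_iff]
      rintro _ ⟨m, rfl⟩
      have hm : m = ∑ j, m j • Pi.single j (1 : ℚ) := by
        ext k
        simp [Finset.sum_apply, Pi.single_apply]
      rw [hm, map_sum]
      refine Subalgebra.sum_mem _ fun j _ => ?_
      rw [map_smul]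
      exact (S.comap Algebra.TensorProduct.includeRight).smul_mem
        (show _ ∈ S.comap Algebra.TensorProduct.includeRight from hv j) _
    intro x
    have : x ∈ S.comap (Algebra.TensorProduct.includeRight) := h ▸ Algebra.mem_top
    exact this
  rw [eq_top_iff]
  intro a _
  induction a using TensorProduct.induction_on with
  | zero => exact zero_mem _
  | add a b ha hb => exact add_mem (ha Algebra.mem_top) (hb Algebra.mem_top)
  | tmul p x =>
    have := mul_mem (hp p) (hx x)
    simpa using this

lemma tg_mul_comm (i : Fin r) (a : FGCA r n) : tg r n i * a = a * tg r n i := by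
  induction a using TensorProduct.induction_on with
  | zero => simp
  | add a b ha hb => rw [mul_add, add_mul, ha, hb]
  | tmul p x => simp [tg, mul_comm]

lemma vg_mul_self (j : Fin n) : vg r n j * vg r n j = 0 := by
  simp [vg]

lemma vg_mul_swap (i j : Fin n) : vg r n i * vg r n j = -(vg r n j * vg r n i) := by
  rw [eq_neg_iff_add_eq_zero]
  simp only [vg, Algebra.TensorProduct.tmul_mul_tmul, ← TensorProduct.tmul_add,
    ExteriorAlgebra.ι_add_mul_swap, TensorProduct.tmul_zero]

lemma X_smul_eq (i : Fin r) (a : FGCA r n) :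
    (MvPolynomial.X i : MvPolynomial (Fin r) ℚ) • a = tg r n i * a := by
  exact Algebra.smul_def _ a

instance finite_over_polynomials :
    Module.Finite (MvPolynomial (Fin r) ℚ) (FGCA r n) := by
  have : Module.Finite ℚ (ExteriorAlgebra ℚ (Fin n → ℚ)) :=
    Module.Finite.of_basis (Pi.basisFun ℚ (Fin n)).ExteriorAlgebra
  infer_instance

/-- If `D` commutes with multiplication by `t₁` and `t₁ ^ N` annihilates the cohomology, then the
cohomology is finite-dimensional: `ker D` is a finitely generated `ℚ[t₁]`-module by Noetherianity,
so modulo `im D` it is spanned by the `t₁ ^ i * g` with `i < N` and `g` in a finite generating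
set. -/
lemma finiteDimensional_of_tg_pow (D : FGCA 1 n →ₗ[ℚ] FGCA 1 n) (N : ℕ)
    (hDt : ∀ a, D (tg 1 n 0 * a) = tg 1 n 0 * D a)
    (hN : ∀ a, D a = 0 → tg 1 n 0 ^ N * a ∈ LinearMap.range D) :
    FiniteDimensional ℚ (Cohomology 1 n D) := by
  -- A `ℚ`-subspace stable under `t₁` is a `ℚ[t₁]`-submodule.
  have key : ∀ V : Submodule ℚ (FGCA 1 n), (∀ a ∈ V, tg 1 n 0 * a ∈ V) →
      ∀ (p : MvPolynomial (Fin 1) ℚ), ∀ a ∈ V, p • a ∈ V := by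
    intro V hV p
    induction p using MvPolynomial.induction_on with
    | C q =>
      intro a ha
      have : (MvPolynomial.C q : MvPolynomial (Fin 1) ℚ) • a = q • a := by
        rw [← MvPolynomial.algebraMap_eq, algebraMap_smul]
      rw [this]
      exact V.smul_mem _ ha
    | add p q hp hq =>
      intro a ha
      rw [add_smul]
      exact V.add_mem (hp a ha) (hq a ha)
    | mul_X p i hp =>
      intro a ha
      rw [mul_smul, X_smul_eq, Subsingleton.elim i 0]
      exact hp _ (hV a ha)
  let K : Submodule (MvPolynomial (Fin 1) ℚ) (FGCA 1 n) :=
    { carrier := {a | D a = 0}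
      add_mem' := fun {a b} ha hb => by
        change D (a + b) = 0
        rw [map_add, show D a = 0 from ha, show D b = 0 from hb, add_zero]
      zero_mem' := map_zero D
      smul_mem' := fun p a ha => key (LinearMap.ker D) (fun a ha => by
        rw [LinearMap.mem_ker] at ha ⊢
        rw [hDt, ha, mul_zero]) p a ha }
  obtain ⟨s, hs⟩ : K.FG := IsNoetherian.noetherian K
  let T : Set (FGCA 1 n) :=
    (fun x : ℕ × FGCA 1 n => tg 1 n 0 ^ x.1 * x.2) '' (↑(Finset.range N ×ˢ s))
  have hT : T.Finite := (Finset.finite_toSet _).image _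
  let V : Submodule ℚ (FGCA 1 n) := LinearMap.range D ⊔ Submodule.span ℚ T
  have hpow : ∀ g ∈ s, ∀ i ≤ N, tg 1 n 0 ^ i * g ∈ V := by
    intro g hg i hi
    rcases hi.lt_or_eq with hi | rfl
    · exact Submodule.mem_sup_right (Submodule.subset_span
        ⟨(i, g), by simpa using ⟨hi, hg⟩, rfl⟩)
    · have hgK : g ∈ K := hs ▸ Submodule.subset_span hg
      exact Submodule.mem_sup_left (hN g hgK)
  have hV : ∀ a ∈ V, tg 1 n 0 * a ∈ V := by
    intro a ha
    have hle : V ≤ V.comap (LinearMap.mulLeft ℚ (tg 1 n 0)) := by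
      refine sup_le ?_ (Submodule.span_le.2 ?_)
      · rintro _ ⟨y, rfl⟩
        exact Submodule.mem_sup_left ⟨tg 1 n 0 * y, hDt y⟩
      · rintro _ ⟨⟨i, g⟩, hig, rfl⟩
        have hig' : i < N ∧ g ∈ s := by simpa using hig
        change tg 1 n 0 * (tg 1 n 0 ^ i * g) ∈ V
        rw [← mul_assoc, ← pow_succ']
        exact hpow g hig'.2 _ hig'.1
    exact hle ha
  have hKV : LinearMap.ker D ≤ V := by
    intro a ha
    have haK : a ∈ Submodule.span (MvPolynomial (Fin 1) ℚ) (s : Set (FGCA 1 n)) := by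
      rw [hs]; exact ha
    induction haK using Submodule.span_induction with
    | mem g hg => simpa using hpow g hg 0 (Nat.zero_le _)
    | zero => exact V.zero_mem
    | add x y hx hy ihx ihy =>
      rw [hs] at hx hy
      exact V.add_mem (ihx hx) (ihy hy)
    | smul p x hx ih =>
      rw [hs] at hx
      exact key V hV p x (ih hx)
  have hle : (LinearMap.ker D).map (LinearMap.range D).mkQ ≤
      (Submodule.span ℚ T).map (LinearMap.range D).mkQ := by
    refine (Submodule.map_mono hKV).trans ?_
    rw [Submodule.map_sup, Submodule.mkQ_map_self, bot_sup_eq]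
  have : FiniteDimensional ℚ (Submodule.span ℚ T) := FiniteDimensional.span_of_finite ℚ hT
  exact Submodule.finiteDimensional_of_le hle

/-- The two computations with the Leibniz rule, in an arbitrary `ℚ`-algebra, with `x`, `y`, `z` in the
roles of `v₁`, `v₂`, `v₄`: `D ∘ D` commutes with left multiplication by `z`, and `t ^ 8 * a` is a
coboundary for every cocycle `a`. -/
lemma leibniz_core {A : Type*} [Ring A] [Algebra ℚ A] (D : A →ₗ[ℚ] A) (t x y z : A)
    (Lt : ∀ b, D (t * b) = t * D b)
    (Lx : ∀ b, D (x * b) = D x * b - x * D b) (hx : D x = 0)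
    (Ly : ∀ b, D (y * b) = D y * b - y * D b) (hy : D y = 0)
    (Lz : ∀ b, D (z * b) = D z * b - z * D b) (hz : D z = x * y * t + t ^ 4)
    (ht : ∀ a, t * a = a * t) (hyx : y * x = -(x * y)) (hxx : x * x = 0) :
    (∀ b, D (D (z * b)) = z * D (D b)) ∧
      ∀ a, D a = 0 → D (z * ((t ^ 4 - x * y * t) * a)) = t ^ 8 * a := by
  simp only [hx, hy, hz, zero_mul, zero_sub] at Lx Ly Lz
  -- `t ^ 4` and `x y t` are even cocycles, so left multiplication by them commutes with `D`.
  have Lt4 : ∀ b, D (t ^ 4 * b) = t ^ 4 * D b := fun b => by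
    simp only [pow_succ, pow_zero, one_mul, mul_assoc, Lt]
  have LN : ∀ b, D (x * y * t * b) = x * y * t * D b := fun b => by
    simp only [mul_assoc, Lt, Lx, Ly, mul_neg, neg_neg]
  refine ⟨fun b => ?_, fun a ha => ?_⟩
  · rw [Lz, map_sub, Lz, add_mul, map_add, LN, Lt4, add_mul]
    abel
  · have hxyxy : (x * y) * (x * y) = 0 := by
      rw [mul_assoc, ← mul_assoc y, hyx, neg_mul, mul_neg, ← mul_assoc, ← mul_assoc, hxx]
      simp
    have hNN : (x * y * t) * (x * y * t) = 0 := by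
      rw [mul_assoc (x * y), ← mul_assoc t, ht (x * y), ← mul_assoc, ← mul_assoc,
        hxyxy, zero_mul, zero_mul]
    have hcomm : Commute (t ^ 4) (x * y * t) := Commute.pow_left (ht _) 4
    have h8 : t ^ 8 = (x * y * t + t ^ 4) * (t ^ 4 - x * y * t) := by
      rw [add_mul, mul_sub, mul_sub, hNN, hcomm.eq, ← pow_add]
      abel
    have hcocycle : D ((t ^ 4 - x * y * t) * a) = 0 := by
      rw [sub_mul, map_sub, Lt4, LN, ha, mul_zero, mul_zero, sub_zero]
    rw [Lz, hcocycle, h8, mul_zero, sub_zero, ← mul_assoc]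

lemma add_neg_one_pow_smul {M : Type*} [AddCommGroup M] [Module ℚ M] {k : ℕ} (hk : Odd k)
    (x y : M) : x + (-1 : ℚ) ^ k • y = x - y := by
  rw [hk.neg_one_pow, neg_one_smul, sub_eq_add_neg]

/-- Left multiplication by an odd cocycle commutes with `D ∘ D`. -/
lemma sq_comm_of_odd_cocycle {A : Type*} [Ring A] [Algebra ℚ A] (D : A →ₗ[ℚ] A) (x : A)
    (Lx : ∀ b, D (x * b) = D x * b - x * D b) (hx : D x = 0) (b : A) :
    D (D (x * b)) = x * D (D b) := by
  rw [Lx, hx, zero_mul, zero_sub, map_neg, Lx, hx, zero_mul, zero_sub, neg_neg]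

end Helpers

local notation "dv" => (![3, 3, 3, 7, 7] : Fin 5 → ℕ)
local notation "t₁" => tg 1 5 0
local notation "v₁" => vg 1 5 0
local notation "v₂" => vg 1 5 1
local notation "v₃" => vg 1 5 2
local notation "v₄" => vg 1 5 3
local notation "v₅" => vg 1 5 4

theorem stmt_2 (D : FGCA 1 5 →ₗ[ℚ] FGCA 1 5)
    (hLeib : IsLeibniz 1 5 dv D)
    (hdeg : RaisesDegByOne 1 5 dv D)
    (hD0 : D t₁ = (0 : FGCA 1 5))
    (hD1 : D v₁ = (0 : FGCA 1 5))
    (hD2 : D v₂ = (0 : FGCA 1 5))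
    (hD3 : D v₃ = (0 : FGCA 1 5))
    (hD4 : D v₅ = (0 : FGCA 1 5))
    (hD5 : D v₄ = v₁ * v₂ * t₁ + t₁ ^ 4)
    : D ∘ₗ D = 0 ∧ FiniteDimensional ℚ (Cohomology 1 5 D) := by
  have Lt : ∀ b, D (t₁ * b) = t₁ * D b := fun b => by
    have := hLeib 2 t₁ b (tg_mem_homog _ 0)
    simpa [hD0] using this
  have Lv : ∀ (j : Fin 5) (b), D (vg 1 5 j * b) = D (vg 1 5 j) * b - vg 1 5 j * D b := by
    intro j b
    have := hLeib (dv j) _ b (vg_mem_homog _ j)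
    exact this.trans (add_neg_one_pow_smul (by fin_cases j <;> decide) _ _)
  have L1 : D 1 = 0 := by
    have := hLeib 0 1 1 (one_mem_homog _)
    simpa using this
  obtain ⟨hsq, h8⟩ := leibniz_core D t₁ v₁ v₂ v₄ Lt (Lv 0) hD1 (Lv 1) hD2 (Lv 3) hD5
    (tg_mul_comm 0) (vg_mul_swap 1 0) (vg_mul_self 0)
  have hgen : ∀ j b, D (D (vg 1 5 j * b)) = vg 1 5 j * D (D b) := by
    intro j
    fin_cases j
    · exact sq_comm_of_odd_cocycle D v₁ (Lv 0) hD1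
    · exact sq_comm_of_odd_cocycle D v₂ (Lv 1) hD2
    · exact sq_comm_of_odd_cocycle D v₃ (Lv 2) hD3
    · exact hsq
    · exact sq_comm_of_odd_cocycle D v₅ (Lv 4) hD4
  refine ⟨?_, finiteDimensional_of_tg_pow D 8 Lt fun a ha => ⟨_, h8 a ha⟩⟩
  let S : Subalgebra ℚ (FGCA 1 5) :=
    { carrier := {x | ∀ b, D (D (x * b)) = x * D (D b)}
      mul_mem' := fun {x y} hx hy b => by rw [mul_assoc, hx, hy, mul_assoc]
      add_mem' := fun {x y} hx hy b => by
        rw [add_mul, map_add, map_add, hx, hy, add_mul]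
      algebraMap_mem' := fun q b => by
        simp only [← Algebra.smul_def, map_smul] }
  have hS : S = ⊤ := by
    refine eq_top_of_generators_mem S (fun i b => ?_) hgen
    rw [Subsingleton.elim i 0, Lt, Lt]
  refine LinearMap.ext fun x => ?_
  have hx : x ∈ S := hS ▸ Algebra.mem_top
  have := hx 1
  rw [L1, map_zero, mul_zero, mul_one] at this
  exact this

end
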